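/- Convergence of FedSplit with uniformly inexact proximal updates: Let f_j : R^d -> R be l_j-strongly convex and L_j-smooth for j = 1,...,m; set l* = min_j l_j, L* = max_j L_j, and kappa = L*/l*. Run the FedSplit procedure with stepsize s = 1/sqrt(l* L*), where each local proximal update uses an approximate solver satisfying ||prox_update_j(z) - prox_{s f_j}(z)|| <= b for all j and all z in R^d. Let x* be the minimizer of sum_j f_j and let z* in (R^d)^m be the unique fixed point of the exact FedSplit iteration. Then for every t >= 1, the server iterate satisfies ||x^{(t+1)} - x*|| <= (1 - 2/(sqrt(kappa)+1))^t * ||z^{(1)} - z*|| / sqrt(m) + (sqrt(kappa)+1)*b. -/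

import Mathlib

open Filter Finset RealInnerProductSpace

/-!
Write `R_j w = 2 prox_{s f_j} w - w` for the reflected proximal operators. The exact FedSplit map is
the block operator `(R_1, …, R_m)` composed with the reflection `z_j ↦ 2 z̄ - z_j` across the
consensus subspace, where `z̄` is the block average. The reflection is an isometry and, for
`s = 1 / √(l L)`, each `R_j` contracts by `ρ = 1 - 2 / (√κ + 1)` thanks to the cocoercivity
inequality `l L ‖x - y‖² + ‖∇f x - ∇f y‖² ≤ (l + L) ⟪∇f x - ∇f y, x - y⟫`. Hence the exact map is a
`ρ`-contraction. An inexact step is off by at most `2 b √m`, and these errors accumulate to at most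
`2 b √m / (1 - ρ) = (√κ + 1) b √m`. Averaging the blocks divides norms by `√m`, and at a fixed point
the average annihilates `∑ j, ∇f_j`, so it is the minimizer.
-/

namespace FedSplit

section QuadraticBounds

variable {E : Type*} [NormedAddCommGroup E] [InnerProductSpace ℝ E]
  {f : E → ℝ} {g : E → E} {l L : ℝ}

/-- First-order form of `l`-strong convexity. The gradient field is an arbitrary map `g`, so that
the notion needs neither differentiability nor completeness. -/
def HasQuadraticLowerBound (f : E → ℝ) (g : E → E) (l : ℝ) : Prop :=
  ∀ x y, f x + ⟪g x, y - x⟫ + l / 2 * ‖y - x‖ ^ 2 ≤ f y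

/-- The descent inequality satisfied by an `L`-smooth function with gradient field `g`. -/
def HasQuadraticUpperBound (f : E → ℝ) (g : E → E) (L : ℝ) : Prop :=
  ∀ x y, f y ≤ f x + ⟪g x, y - x⟫ + L / 2 * ‖y - x‖ ^ 2

lemma HasQuadraticLowerBound.mono (h : HasQuadraticLowerBound f g L) (hlL : l ≤ L) :
    HasQuadraticLowerBound f g l := fun x y => by
  refine le_trans ?_ (h x y)
  gcongr

lemma HasQuadraticUpperBound.mono (h : HasQuadraticUpperBound f g l) (hlL : l ≤ L) :
    HasQuadraticUpperBound f g L := fun x y => by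
  refine (h x y).trans ?_
  gcongr

lemma HasQuadraticLowerBound.le_of_upperBound [Nontrivial E]
    (hlow : HasQuadraticLowerBound f g l) (hup : HasQuadraticUpperBound f g L) : l ≤ L := by
  obtain ⟨v, hv⟩ := exists_ne (0 : E)
  have hbounds := (hlow 0 v).trans (hup 0 v)
  rw [sub_zero] at hbounds
  have hv' : 0 < ‖v‖ ^ 2 := by positivity
  exact le_of_mul_le_mul_right (by linarith) hv'

lemma HasQuadraticLowerBound.sum {ι : Type*} [Fintype ι] {f : ι → E → ℝ} {g : ι → E → E}
    (h : ∀ j, HasQuadraticLowerBound (f j) (g j) l) :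
    HasQuadraticLowerBound (fun x => ∑ j, f j x) (fun x => ∑ j, g j x) (Fintype.card ι * l) :=
  fun x y => by
    have hsum := sum_le_sum fun j (_ : j ∈ univ) => h j x y
    rw [sum_add_distrib, sum_add_distrib, ← sum_inner, sum_const, card_univ,
      nsmul_eq_mul] at hsum
    linarith

lemma HasQuadraticLowerBound.eq_of_isMinOn (h : HasQuadraticLowerBound f g l) (hl : 0 < l)
    {a x : E} (ha : g a = 0) (hx : IsMinOn f Set.univ x) : x = a := by
  have hgrowth := (h a x).trans (hx (Set.mem_univ a))
  rw [ha, inner_zero_left] at hgrowth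
  have hsq : ‖x - a‖ ^ 2 ≤ 0 := nonpos_of_mul_nonpos_right (by linarith) (half_pos hl)
  rw [sq_nonpos_iff, norm_eq_zero, sub_eq_zero] at hsq
  exact hsq

lemma sub_half_mul_norm_sq_tangent (f : E → ℝ) (g : E → E) (c : ℝ) (x y : E) :
    f x - c / 2 * ‖x‖ ^ 2 + ⟪g x - c • x, y - x⟫ =
      f x + ⟪g x, y - x⟫ + c / 2 * ‖y - x‖ ^ 2 - c / 2 * ‖y‖ ^ 2 := by
  rw [norm_sub_sq_real, inner_sub_left, real_inner_smul_left, inner_sub_right x,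
    real_inner_self_eq_norm_sq, real_inner_comm x y]
  ring

lemma HasQuadraticLowerBound.sub_half_mul_norm_sq (h : HasQuadraticLowerBound f g l) (c : ℝ) :
    HasQuadraticLowerBound (fun x => f x - c / 2 * ‖x‖ ^ 2) (fun x => g x - c • x) (l - c) :=
  fun x y => by
    rw [sub_half_mul_norm_sq_tangent]
    linarith [h x y]

lemma HasQuadraticUpperBound.sub_half_mul_norm_sq (h : HasQuadraticUpperBound f g L) (c : ℝ) :
    HasQuadraticUpperBound (fun x => f x - c / 2 * ‖x‖ ^ 2) (fun x => g x - c • x) (L - c) :=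
  fun x y => by
    rw [sub_half_mul_norm_sq_tangent]
    linarith [h x y]

-- Evaluate both bounds at the gradient step `y - c • (g y - g x)`.
lemma HasQuadraticLowerBound.add_mul_norm_sub_sq_le (hlow : HasQuadraticLowerBound f g 0)
    (hup : HasQuadraticUpperBound f g L) (c : ℝ) (x y : E) :
    f x + ⟪g x, y - x⟫ + (c - L / 2 * c ^ 2) * ‖g x - g y‖ ^ 2 ≤ f y := by
  rw [norm_sub_rev]
  set w := g y - g x with hw
  have hbounds := (hlow x (y - c • w)).trans (hup y (y - c • w))
  have hstep_x : ⟪g x, y - c • w - x⟫ = ⟪g x, y - x⟫ - c * ⟪g x, w⟫ := by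
    rw [sub_right_comm, inner_sub_right, real_inner_smul_right]
  have hstep_y : ⟪g y, y - c • w - y⟫ = -(c * ⟪g y, w⟫) := by
    rw [sub_sub_cancel_left, inner_neg_right, real_inner_smul_right]
  have hnorm : ‖y - c • w - y‖ ^ 2 = c ^ 2 * ‖w‖ ^ 2 := by
    rw [sub_sub_cancel_left, norm_neg, norm_smul, mul_pow, Real.norm_eq_abs, sq_abs]
  have hw_sq : ‖w‖ ^ 2 = ⟪g y, w⟫ - ⟪g x, w⟫ := by
    rw [← inner_sub_left, ← hw, real_inner_self_eq_norm_sq]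
  rw [hstep_x, hstep_y, hnorm] at hbounds
  linear_combination hbounds + c * hw_sq

lemma HasQuadraticLowerBound.norm_sub_sq_le_mul_inner (hlow : HasQuadraticLowerBound f g 0)
    (hup : HasQuadraticUpperBound f g L) (x y : E) :
    ‖g x - g y‖ ^ 2 ≤ L * ⟪g x - g y, x - y⟫ := by
  rcases eq_or_ne (g x - g y) 0 with hg | hg
  · simp [hg]
  have hpos : 0 < ‖g x - g y‖ ^ 2 := by positivity
  have hquad (c : ℝ) : 0 ≤ L * ‖g x - g y‖ ^ 2 * (c * c) + -(2 * ‖g x - g y‖ ^ 2) * c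
      + ⟪g x - g y, x - y⟫ := by
    have hxy := hlow.add_mul_norm_sub_sq_le hup c x y
    have hyx := hlow.add_mul_norm_sub_sq_le hup c y x
    rw [← neg_sub x y, inner_neg_right] at hxy
    rw [norm_sub_rev] at hyx
    rw [inner_sub_left]
    linarith
  have hdiscrim := discrim_le_zero hquad
  rw [discrim] at hdiscrim
  exact le_of_mul_le_mul_right (by linarith) hpos

lemma HasQuadraticLowerBound.mul_norm_sq_add_norm_sq_le (hlow : HasQuadraticLowerBound f g l)
    (hup : HasQuadraticUpperBound f g L) (x y : E) :
    l * L * ‖x - y‖ ^ 2 + ‖g x - g y‖ ^ 2 ≤ (l + L) * ⟪g x - g y, x - y⟫ := by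
  have hconvex := hlow.sub_half_mul_norm_sq l
  rw [sub_self] at hconvex
  have hcoco := hconvex.norm_sub_sq_le_mul_inner (hup.sub_half_mul_norm_sq l) x y
  have hsub : g x - l • x - (g y - l • y) = g x - g y - l • (x - y) := by module
  rw [hsub, norm_sub_sq_real, inner_sub_left (g x - g y), real_inner_smul_left,
    real_inner_smul_right, real_inner_self_eq_norm_sq, norm_smul, mul_pow, Real.norm_eq_abs,
    sq_abs] at hcoco
  linear_combination hcoco

end QuadraticBounds

section Gradient

variable {E : Type*} [NormedAddCommGroup E] [InnerProductSpace ℝ E] [CompleteSpace E]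
  {f : E → ℝ} {L : ℝ}

open AffineMap in
lemma hasDerivAt_comp_lineMap {x y : E} {t : ℝ} (hf : DifferentiableAt ℝ f (lineMap x y t)) :
    HasDerivAt (fun t : ℝ => f (lineMap x y t)) ⟪gradient f (lineMap x y t), y - x⟫ t :=
  hf.hasGradientAt.hasFDerivAt.comp_hasDerivAt t hasDerivAt_lineMap

lemma hasQuadraticUpperBound_of_gradient_lipschitz (hf : Differentiable ℝ f)
    (hL : ∀ x y, ‖gradient f x - gradient f y‖ ≤ L * ‖x - y‖) :
    HasQuadraticUpperBound f (gradient f) L := fun x y => by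
  let γ : ℝ → E := AffineMap.lineMap x y
  let B : ℝ → ℝ := fun t => f x + t * ⟪gradient f x, y - x⟫ + t ^ 2 * (L / 2 * ‖y - x‖ ^ 2)
  have hB (t : ℝ) : HasDerivAt B (⟪gradient f x, y - x⟫ + 2 * t * (L / 2 * ‖y - x‖ ^ 2)) t := by
    simpa [B] using (((hasDerivAt_id t).mul_const ⟪gradient f x, y - x⟫).const_add (f x)).fun_add
      ((hasDerivAt_pow 2 t).mul_const (L / 2 * ‖y - x‖ ^ 2))
  have hslope (t : ℝ) (ht : 0 ≤ t) :
      ⟪gradient f (γ t), y - x⟫ ≤ ⟪gradient f x, y - x⟫ + 2 * t * (L / 2 * ‖y - x‖ ^ 2) := by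
    have hγ : ‖γ t - x‖ = t * ‖y - x‖ := by
      rw [← dist_eq_norm, dist_lineMap_left, Real.norm_of_nonneg ht, dist_comm, dist_eq_norm]
    rw [← sub_le_iff_le_add', ← inner_sub_left]
    calc ⟪gradient f (γ t) - gradient f x, y - x⟫
        ≤ ‖gradient f (γ t) - gradient f x‖ * ‖y - x‖ := real_inner_le_norm _ _
      _ ≤ L * ‖γ t - x‖ * ‖y - x‖ := by gcongr; exact hL _ _
      _ = 2 * t * (L / 2 * ‖y - x‖ ^ 2) := by rw [hγ]; ring
  have hderiv (t : ℝ) := hasDerivAt_comp_lineMap (hf (γ t))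
  have hle := image_le_of_deriv_right_le_deriv_boundary (a := 0) (b := 1) (B := B)
    (fun t _ => (hderiv t).continuousAt.continuousWithinAt)
    (fun t _ => (hderiv t).hasDerivWithinAt) (by simp [B])
    (fun t _ => (hB t).continuousAt.continuousWithinAt)
    (fun t _ => (hB t).hasDerivWithinAt) (fun t ht => hslope t ht.1)
    (Set.right_mem_Icc.2 zero_le_one)
  simpa only [B, AffineMap.lineMap_apply_one, one_mul, one_pow] using hle

end Gradient

section BlockNorms

variable {E F : Type*} [SeminormedAddCommGroup E] [SeminormedAddCommGroup F]
  {ι : Type*} [Fintype ι]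

lemma norm_le_norm_of_forall_norm_apply_le {v : PiLp 2 (fun _ : ι => E)}
    {w : PiLp 2 (fun _ : ι => F)} (h : ∀ j, ‖v j‖ ≤ ‖w j‖) : ‖v‖ ≤ ‖w‖ := by
  rw [PiLp.norm_eq_of_L2, PiLp.norm_eq_of_L2]
  gcongr with j
  exact h j

lemma norm_le_mul_sqrt_card {v : PiLp 2 (fun _ : ι => E)} {c : ℝ} (hc : 0 ≤ c)
    (h : ∀ j, ‖v j‖ ≤ c) : ‖v‖ ≤ c * √(Fintype.card ι) :=
  calc ‖v‖ ≤ ‖(WithLp.toLp 2 fun _ => c : PiLp 2 (fun _ : ι => ℝ))‖ :=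
        norm_le_norm_of_forall_norm_apply_le fun j => (h j).trans (le_abs_self c)
    _ = c * √(Fintype.card ι) := by
        simp [PiLp.norm_eq_of_L2, mul_comm, Real.sqrt_sq hc]

end BlockNorms

section Blocks

variable {E : Type*} [NormedAddCommGroup E] [NormedSpace ℝ E] {ι : Type*} [Fintype ι]

/-- The average of the blocks of `z`, which is the quantity held by the FedSplit server. -/
noncomputable def blockMean : PiLp 2 (fun _ : ι => E) →L[ℝ] E :=
  (Fintype.card ι : ℝ)⁻¹ • ∑ j, PiLp.proj 2 (fun _ : ι => E) j

lemma blockMean_apply (z : PiLp 2 (fun _ : ι => E)) :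
    blockMean z = (Fintype.card ι : ℝ)⁻¹ • ∑ j, z j := by
  simp [blockMean]

lemma card_smul_blockMean (z : PiLp 2 (fun _ : ι => E)) :
    (Fintype.card ι : ℝ) • blockMean z = ∑ j, z j := by
  rcases isEmpty_or_nonempty ι
  · simp
  · rw [blockMean_apply, smul_inv_smul₀ (by positivity)]

lemma norm_blockMean_le (z : PiLp 2 (fun _ : ι => E)) :
    ‖blockMean z‖ ≤ ‖z‖ / √(Fintype.card ι) := by
  have hsum : ∑ j, ‖z j‖ ≤ √(Fintype.card ι) * ‖z‖ := by
    rw [PiLp.norm_eq_of_L2, ← Real.sqrt_mul (by positivity)]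
    exact Real.le_sqrt_of_sq_le sq_sum_le_card_mul_sum_sq
  calc ‖blockMean z‖ ≤ (Fintype.card ι : ℝ)⁻¹ * ∑ j, ‖z j‖ := by
        rw [blockMean_apply, norm_smul, Real.norm_of_nonneg (by positivity)]
        gcongr
        exact norm_sum_le _ _
    _ ≤ (Fintype.card ι : ℝ)⁻¹ * (√(Fintype.card ι) * ‖z‖) := by gcongr
    _ = ‖z‖ / √(Fintype.card ι) := by
        rw [← mul_assoc, inv_mul_eq_div, Real.sqrt_div_self, inv_mul_eq_div]

/-- The reflection `z_j ↦ 2 z̄ - z_j` across the consensus subspace `z_1 = ⋯ = z_m`. -/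
noncomputable def consensusReflection (z : PiLp 2 (fun _ : ι => E)) : PiLp 2 (fun _ : ι => E) :=
  WithLp.toLp 2 fun j => (2 : ℝ) • blockMean z - z j

lemma consensusReflection_sub (z w : PiLp 2 (fun _ : ι => E)) :
    consensusReflection (z - w) = consensusReflection z - consensusReflection w := by
  ext j : 1
  simp only [consensusReflection, map_sub, PiLp.sub_apply]
  module

/-- The reflected (Cayley) operator `2 P - id` of `P`; for a proximal operator `P`, it carries the
contraction estimate behind FedSplit. -/
def reflected (P : E → E) (w : E) : E := (2 : ℝ) • P w - w

/-- One FedSplit round with local updates `P j`, exact or approximate. The server variable is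
eliminated: it equals `blockMean z` in every round. -/
noncomputable def fedSplitMap (P : ι → E → E) (z : PiLp 2 (fun _ : ι => E)) :
    PiLp 2 (fun _ : ι => E) :=
  WithLp.toLp 2 fun j => z j + (2 : ℝ) • (P j ((2 : ℝ) • blockMean z - z j) - blockMean z)

lemma fedSplitMap_apply (P : ι → E → E) (z : PiLp 2 (fun _ : ι => E)) (j : ι) :
    fedSplitMap P z j = reflected (P j) (consensusReflection z j) := by
  simp only [fedSplitMap, reflected, consensusReflection]
  module

lemma norm_fedSplitMap_sub_fedSplitMap_le {P Q : ι → E → E} {b : ℝ} (hb : 0 ≤ b)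
    (hPQ : ∀ j w, ‖P j w - Q j w‖ ≤ b) (z : PiLp 2 (fun _ : ι => E)) :
    ‖fedSplitMap P z - fedSplitMap Q z‖ ≤ 2 * b * √(Fintype.card ι) := by
  refine norm_le_mul_sqrt_card (by positivity) fun j => ?_
  have hsub : (fedSplitMap P z - fedSplitMap Q z) j =
      (2 : ℝ) • (P j ((2 : ℝ) • blockMean z - z j) - Q j ((2 : ℝ) • blockMean z - z j)) := by
    simp only [fedSplitMap, PiLp.sub_apply]
    module
  rw [hsub, norm_smul, Real.norm_two]
  gcongr
  exact hPQ j _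

lemma apply_of_isFixedPt_fedSplitMap {P : ι → E → E} {z : PiLp 2 (fun _ : ι => E)}
    (hz : Function.IsFixedPt (fedSplitMap P) z) (j : ι) :
    P j ((2 : ℝ) • blockMean z - z j) = blockMean z := by
  have hj : z j + (2 : ℝ) • (P j ((2 : ℝ) • blockMean z - z j) - blockMean z) = z j :=
    congr($hz j)
  rwa [add_eq_left, smul_eq_zero_iff_right two_ne_zero, sub_eq_zero] at hj

end Blocks

section Prox

variable {E : Type*} [NormedAddCommGroup E] [InnerProductSpace ℝ E]

/-- `p` is a proximal point of `f` at `z` with stepsize `s`, i.e. `p ∈ argmin f + ‖z - ·‖² / (2 s)`;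
a predicate, since a minimizer may fail to exist or be unique for general `f`. -/
def IsProx (f : E → ℝ) (s : ℝ) (z p : E) : Prop :=
  ∀ u, f p + (2 * s)⁻¹ * ‖z - p‖ ^ 2 ≤ f u + (2 * s)⁻¹ * ‖z - u‖ ^ 2

lemma IsProx.smul_gradient_eq [CompleteSpace E] {f : E → ℝ} {s : ℝ} {z p : E}
    (h : IsProx f s z p) (hf : DifferentiableAt ℝ f p) (hs : s ≠ 0) :
    s • gradient f p = z - p := by
  have hmin : IsLocalMin (fun u => f u + (2 * s)⁻¹ * ‖z - u‖ ^ 2) p := Eventually.of_forall h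
  have hderiv := hf.hasFDerivAt.add
    ((((hasFDerivAt_id p).const_sub z).norm_sq).const_mul (2 * s)⁻¹)
  have hzero := hmin.hasFDerivAt_eq_zero hderiv
  refine ext_inner_right ℝ fun v => ?_
  have hv : ⟪gradient f p, v⟫ + (2 * s)⁻¹ * (2 * -⟪z - p, v⟫) = 0 := by
    simpa [inner_sub_left] using congr($hzero v)
  rw [real_inner_smul_left]
  field_simp at hv
  linarith

lemma one_sub_two_div_sqrt_div_add_one {l L : ℝ} (hl : 0 < l) (hL : 0 ≤ L) :
    1 - 2 / (√(L / l) + 1) = (√L - √l) / (√L + √l) := by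
  have : 0 < √l := Real.sqrt_pos.2 hl
  rw [Real.sqrt_div hL]
  field_simp
  ring

lemma norm_sub_smul_le_of_mul_norm_sq_add_norm_sq_le {u v : E} {l L : ℝ} (hl : 0 < l)
    (hlL : l ≤ L) (h : l * L * ‖u‖ ^ 2 + ‖v‖ ^ 2 ≤ (l + L) * ⟪v, u⟫) :
    ‖u - (1 / √(l * L)) • v‖ ≤ (1 - 2 / (√(L / l) + 1)) * ‖u + (1 / √(l * L)) • v‖ := by
  have hL : 0 < L := hl.trans_le hlL
  have hsum : 0 < √L + √l := by positivity
  have hdiff : 0 ≤ √L - √l := sub_nonneg.2 (Real.sqrt_le_sqrt hlL)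
  set s := 1 / √(l * L) with hs
  have hs_sq : s ^ 2 * (l * L) = 1 := by
    rw [hs, div_pow, Real.sq_sqrt (by positivity)]
    field_simp
  have hs_mul : s * (√l * √L) = 1 := by
    rw [hs, ← Real.sqrt_mul hl.le]
    field_simp
  have hcross : ‖u‖ ^ 2 + s ^ 2 * ‖v‖ ^ 2 ≤ s ^ 2 * (l + L) * ⟪v, u⟫ := by
    linear_combination s ^ 2 * h - ‖u‖ ^ 2 * hs_sq
  have hsmul_sq : ‖s • v‖ ^ 2 = s ^ 2 * ‖v‖ ^ 2 := by
    rw [norm_smul, mul_pow, Real.norm_eq_abs, sq_abs]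
  rw [one_sub_two_div_sqrt_div_add_one hl hL.le, div_mul_eq_mul_div, le_div_iff₀ hsum, mul_comm,
    ← sq_le_sq₀ (by positivity) (by positivity), mul_pow, mul_pow, norm_sub_sq_real,
    norm_add_sq_real, hsmul_sq, real_inner_smul_right, real_inner_comm]
  linear_combination 4 * √l * √L * hcross + 4 * s * (l + L) * ⟪v, u⟫ * hs_mul
    - 4 * s * ⟪v, u⟫ * (Real.sq_sqrt hl.le + Real.sq_sqrt hL.le)

lemma norm_reflected_sub_le_of_isProx [CompleteSpace E] {f : E → ℝ} {l L : ℝ} (hl : 0 < l)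
    (hlL : l ≤ L) (hf : Differentiable ℝ f) (hlow : HasQuadraticLowerBound f (gradient f) l)
    (hup : HasQuadraticUpperBound f (gradient f) L) {P : E → E}
    (hP : ∀ z, IsProx f (1 / √(l * L)) z (P z)) (w v : E) :
    ‖reflected P w - reflected P v‖ ≤ (1 - 2 / (√(L / l) + 1)) * ‖w - v‖ := by
  have hL : 0 < L := hl.trans_le hlL
  have hopt (z : E) := (hP z).smul_gradient_eq (hf (P z)) (by positivity)
  have hcontr := norm_sub_smul_le_of_mul_norm_sq_add_norm_sq_le hl hlL
    (hlow.mul_norm_sq_add_norm_sq_le hup (P w) (P v))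
  rw [smul_sub, hopt, hopt] at hcontr
  convert hcontr using 2
  · simp only [reflected]
    module
  · congr 1
    module

end Prox

section Convergence

lemma dist_le_pow_mul_dist_add_of_perturbed_contraction {α : Type*} [PseudoMetricSpace α]
    {T : α → α} {p : α} {ρ δ : ℝ} (hρ : 0 ≤ ρ) (hρ_lt : ρ < 1)
    (hT : ∀ a, dist (T a) p ≤ ρ * dist a p) {u : ℕ → α}
    (hu : ∀ t, dist (u (t + 1)) (T (u t)) ≤ δ) (t : ℕ) :
    dist (u t) p ≤ ρ ^ t * dist (u 0) p + δ / (1 - ρ) := by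
  have hgap : 0 < 1 - ρ := sub_pos.2 hρ_lt
  have hδ : 0 ≤ δ := dist_nonneg.trans (hu 0)
  induction t with
  | zero => simpa using div_nonneg hδ hgap.le
  | succ t ih =>
    calc dist (u (t + 1)) p ≤ dist (u (t + 1)) (T (u t)) + dist (T (u t)) p := dist_triangle _ _ _
      _ ≤ δ + ρ * (ρ ^ t * dist (u 0) p + δ / (1 - ρ)) := by
        gcongr
        · exact hu t
        · exact (hT _).trans (by gcongr)
      _ = ρ ^ (t + 1) * dist (u 0) p + δ / (1 - ρ) := by
        field_simp
        ring

variable {E : Type*} [NormedAddCommGroup E] [InnerProductSpace ℝ E] {ι : Type*} [Fintype ι]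

lemma norm_consensusReflection (z : PiLp 2 (fun _ : ι => E)) :
    ‖consensusReflection z‖ = ‖z‖ := by
  have hblock (j : ι) : ‖consensusReflection z j‖ ^ 2
      = 4 * ‖blockMean z‖ ^ 2 - 4 * ⟪blockMean z, z j⟫ + ‖z j‖ ^ 2 := by
    simp only [consensusReflection]
    rw [norm_sub_sq_real, real_inner_smul_left, norm_smul, mul_pow]
    norm_num
    ring
  have hcross : ∑ j, ⟪blockMean z, z j⟫ = Fintype.card ι * ‖blockMean z‖ ^ 2 := by
    rw [← inner_sum, ← card_smul_blockMean, real_inner_smul_right, real_inner_self_eq_norm_sq]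
  rw [← sq_eq_sq₀ (norm_nonneg _) (norm_nonneg _), PiLp.norm_sq_eq_of_L2, PiLp.norm_sq_eq_of_L2]
  simp_rw [hblock]
  rw [sum_add_distrib, sum_sub_distrib, ← mul_sum (f := fun j => ⟪blockMean z, z j⟫), hcross,
    sum_const, card_univ, nsmul_eq_mul]
  ring

lemma norm_fedSplitMap_sub_le {P : ι → E → E} {ρ : ℝ} (hρ : 0 ≤ ρ)
    (hP : ∀ j w v, ‖reflected (P j) w - reflected (P j) v‖ ≤ ρ * ‖w - v‖)
    (z w : PiLp 2 (fun _ : ι => E)) :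
    ‖fedSplitMap P z - fedSplitMap P w‖ ≤ ρ * ‖z - w‖ :=
  calc ‖fedSplitMap P z - fedSplitMap P w‖
      ≤ ‖ρ • consensusReflection (z - w)‖ := norm_le_norm_of_forall_norm_apply_le fun j => by
        simpa [fedSplitMap_apply, consensusReflection_sub, norm_smul, abs_of_nonneg hρ]
          using hP j (consensusReflection z j) (consensusReflection w j)
    _ = ρ * ‖z - w‖ := by
        rw [norm_smul, norm_consensusReflection, Real.norm_of_nonneg hρ]

lemma sum_gradient_blockMean_eq_zero [CompleteSpace E] {f : ι → E → ℝ} {s : ℝ} (hs : s ≠ 0)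
    {P : ι → E → E} {z : PiLp 2 (fun _ : ι => E)} (hf : ∀ j, Differentiable ℝ (f j))
    (hP : ∀ j w, IsProx (f j) s w (P j w)) (hz : Function.IsFixedPt (fedSplitMap P) z) :
    ∑ j, gradient (f j) (blockMean z) = 0 := by
  have hgrad (j : ι) : s • gradient (f j) (blockMean z) = blockMean z - z j := by
    have hopt := (hP j ((2 : ℝ) • blockMean z - z j)).smul_gradient_eq (hf j _) hs
    rw [apply_of_isFixedPt_fedSplitMap hz] at hopt
    rw [hopt]
    module
  rw [← smul_eq_zero_iff_right hs, smul_sum]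
  simp_rw [hgrad]
  rw [sum_sub_distrib, sum_const, card_univ, ← Nat.cast_smul_eq_nsmul ℝ, card_smul_blockMean,
    sub_self]

lemma norm_blockMean_sub_le [Nonempty ι] {P Q : ι → E → E} {ρ b : ℝ} (hρ : 0 ≤ ρ)
    (hρ_lt : ρ < 1) (hP : ∀ j w v, ‖reflected (P j) w - reflected (P j) v‖ ≤ ρ * ‖w - v‖)
    (hQP : ∀ j w, ‖Q j w - P j w‖ ≤ b) {zstar : PiLp 2 (fun _ : ι => E)}
    (hzstar : Function.IsFixedPt (fedSplitMap P) zstar) {z : ℕ → PiLp 2 (fun _ : ι => E)}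
    (hz : ∀ t, z (t + 1) = fedSplitMap Q (z t)) (t : ℕ) :
    ‖blockMean (z t) - blockMean zstar‖ ≤
      ρ ^ t * ‖z 0 - zstar‖ / √(Fintype.card ι) + 2 * b / (1 - ρ) := by
  have hb : 0 ≤ b := (norm_nonneg _).trans (hQP (Classical.arbitrary ι) 0)
  have hcontr (w : PiLp 2 (fun _ : ι => E)) :
      dist (fedSplitMap P w) zstar ≤ ρ * dist w zstar := by
    rw [dist_eq_norm, dist_eq_norm]
    simpa only [hzstar.eq] using norm_fedSplitMap_sub_le hρ hP w zstar
  have herror (t : ℕ) : dist (z (t + 1)) (fedSplitMap P (z t)) ≤ 2 * b * √(Fintype.card ι) := by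
    rw [hz, dist_eq_norm]
    exact norm_fedSplitMap_sub_fedSplitMap_le hb hQP (z t)
  have hdist := dist_le_pow_mul_dist_add_of_perturbed_contraction hρ hρ_lt hcontr herror t
  rw [dist_eq_norm, dist_eq_norm] at hdist
  calc ‖blockMean (z t) - blockMean zstar‖ ≤ ‖z t - zstar‖ / √(Fintype.card ι) := by
        rw [← map_sub]
        exact norm_blockMean_le _
    _ ≤ (ρ ^ t * ‖z 0 - zstar‖ + 2 * b * √(Fintype.card ι) / (1 - ρ)) / √(Fintype.card ι) := by
        gcongr
    _ = ρ ^ t * ‖z 0 - zstar‖ / √(Fintype.card ι) + 2 * b / (1 - ρ) := by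
        field_simp

lemma norm_blockMean_sub_minimizer_le [CompleteSpace E] [Nonempty ι] {f : ι → E → ℝ}
    (hf : ∀ j, Differentiable ℝ (f j)) {l L : ℝ} (hl : 0 < l)
    (hlow : ∀ j, HasQuadraticLowerBound (f j) (gradient (f j)) l)
    (hup : ∀ j, HasQuadraticUpperBound (f j) (gradient (f j)) L) {P Q : ι → E → E}
    (hP : ∀ j w, IsProx (f j) (1 / √(l * L)) w (P j w)) {b : ℝ}
    (hQP : ∀ j w, ‖Q j w - P j w‖ ≤ b) {xstar : E}
    (hxstar : IsMinOn (fun y => ∑ j, f j y) Set.univ xstar) {zstar : PiLp 2 (fun _ : ι => E)}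
    (hzstar : Function.IsFixedPt (fedSplitMap P) zstar) {z : ℕ → PiLp 2 (fun _ : ι => E)}
    (hz : ∀ t, z (t + 1) = fedSplitMap Q (z t)) (t : ℕ) :
    ‖blockMean (z t) - xstar‖ ≤
      (1 - 2 / (√(L / l) + 1)) ^ t * ‖z 0 - zstar‖ / √(Fintype.card ι) + (√(L / l) + 1) * b := by
  rcases subsingleton_or_nontrivial E
  · have hb : 0 ≤ b := (norm_nonneg _).trans (hQP (Classical.arbitrary ι) 0)
    have hz0 : z 0 = zstar := PiLp.ext fun _ => Subsingleton.elim _ _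
    rw [Subsingleton.elim (blockMean (z t)) xstar, hz0]
    simp only [sub_self, norm_zero, mul_zero, zero_div, zero_add]
    positivity
  have hlL : l ≤ L := (hlow (Classical.arbitrary ι)).le_of_upperBound (hup _)
  have hL : 0 < L := hl.trans_le hlL
  have hmin : xstar = blockMean zstar :=
    (HasQuadraticLowerBound.sum hlow).eq_of_isMinOn (by positivity)
      (sum_gradient_blockMean_eq_zero (by positivity) hf hP hzstar) hxstar
  have hκ : 1 ≤ √(L / l) := Real.one_le_sqrt.2 ((one_le_div hl).2 hlL)
  have hρ : 0 ≤ 1 - 2 / (√(L / l) + 1) :=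
    sub_nonneg.2 ((div_le_one (by positivity)).2 (by linarith))
  have hρ_lt : 1 - 2 / (√(L / l) + 1) < 1 := sub_lt_self 1 (by positivity)
  have herror : 2 * b / (1 - (1 - 2 / (√(L / l) + 1))) = (√(L / l) + 1) * b := by
    field_simp
    ring
  rw [hmin, ← herror]
  exact norm_blockMean_sub_le hρ hρ_lt
    (fun j => norm_reflected_sub_le_of_isProx hl hlL (hf j) (hlow j) (hup j) (hP j)) hQP hzstar hz t

end Convergence

end FedSplit

open FedSplit

theorem fedsplit_inexact_convergence_general
    {E : Type*} [NormedAddCommGroup E] [InnerProductSpace ℝ E] [CompleteSpace E]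
    {m : ℕ} {f : Fin m → E → ℝ} (hdiff : ∀ j, Differentiable ℝ (f j))
    {l L : Fin m → ℝ} (hl : ∀ j, 0 < l j)
    (hstrong : ∀ j, HasQuadraticLowerBound (f j) (gradient (f j)) (l j))
    (hsmooth : ∀ j x y, ‖gradient (f j) x - gradient (f j) y‖ ≤ L j * ‖x - y‖)
    {lstar Lstar : ℝ} (hlstar : IsLeast (Set.range l) lstar)
    (hLstar : IsGreatest (Set.range L) Lstar)
    {kappa : ℝ} (hkappa : kappa = Lstar / lstar) {s : ℝ} (hs : s = 1 / √(lstar * Lstar))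
    {prox proxU : Fin m → E → E} (hprox : ∀ j w, IsProx (f j) s w (prox j w))
    {b : ℝ} (hproxU : ∀ j w, ‖proxU j w - prox j w‖ ≤ b)
    {z : ℕ → PiLp 2 (fun _ : Fin m => E)} {x : ℕ → E}
    (hinit : x 1 = (m : ℝ)⁻¹ • ∑ j, z 1 j)
    (hupdate : ∀ t, 1 ≤ t → ∀ j,
      z (t + 1) j = z t j + (2 : ℝ) • (proxU j ((2 : ℝ) • x t - z t j) - x t))
    (hserver : ∀ t, 1 ≤ t → x (t + 1) = (m : ℝ)⁻¹ • ∑ j, z (t + 1) j)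
    {xstar : E} (hxstar : IsMinOn (fun y => ∑ j, f j y) Set.univ xstar)
    {zstar : PiLp 2 (fun _ : Fin m => E)}
    (hzstar : ∀ j, zstar j = zstar j + (2 : ℝ) •
      (prox j ((2 : ℝ) • ((m : ℝ)⁻¹ • ∑ k, zstar k) - zstar j) - (m : ℝ)⁻¹ • ∑ k, zstar k))
    (t : ℕ) :
    ‖x (t + 1) - xstar‖ ≤
      (1 - 2 / (√kappa + 1)) ^ t * ‖z 1 - zstar‖ / √m + (√kappa + 1) * b := by
  obtain ⟨j₀, hj₀⟩ := hlstar.1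
  have : Nonempty (Fin m) := ⟨j₀⟩
  have hlstar_pos : 0 < lstar := hj₀ ▸ hl j₀
  have hmean (w : PiLp 2 (fun _ : Fin m => E)) : (m : ℝ)⁻¹ • ∑ j, w j = blockMean w := by
    rw [blockMean_apply, Fintype.card_fin]
  simp_rw [hmean] at hinit hserver hzstar
  have hlow (j : Fin m) : HasQuadraticLowerBound (f j) (gradient (f j)) lstar :=
    (hstrong j).mono (hlstar.2 ⟨j, rfl⟩)
  have hup (j : Fin m) : HasQuadraticUpperBound (f j) (gradient (f j)) Lstar :=
    (hasQuadraticUpperBound_of_gradient_lipschitz (hdiff j) (hsmooth j)).mono (hLstar.2 ⟨j, rfl⟩)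
  have hx : ∀ t, x (t + 1) = blockMean (z (t + 1))
    | 0 => hinit
    | t + 1 => hserver (t + 1) t.succ_pos
  have hz (t : ℕ) : z (t + 1 + 1) = fedSplitMap proxU (z (t + 1)) := PiLp.ext fun j => by
    rw [hupdate (t + 1) t.succ_pos, hx]
    rfl
  have hfix : Function.IsFixedPt (fedSplitMap prox) zstar := PiLp.ext fun j => (hzstar j).symm
  rw [hs] at hprox
  rw [hx, hkappa]
  simpa only [Fintype.card_fin, zero_add] using norm_blockMean_sub_minimizer_le hdiff hlstar_pos
    hlow hup hprox hproxU hxstar hfix (z := fun t => z (t + 1)) hz t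

/-- Convergence of FedSplit with uniformly inexact proximal updates (Theorem 1 of
Pathak–Wainwright). Each `f_j` is `l_j`-strongly convex and `L_j`-smooth; `l* = min_j l_j`,
`L* = max_j L_j`, `κ = L*/l*`, and the stepsize is `s = 1/√(l* L*)`.  The approximate proximal
solvers satisfy `‖prox_update_j(z) - prox_{s f_j}(z)‖ ≤ b` uniformly.  Then for every `t ≥ 1`
the server iterate satisfies
`‖x^{(t+1)} - x*‖ ≤ (1 - 2/(√κ+1))^t ‖z^{(1)} - z*‖/√m + (√κ+1) b`. -/
theorem fedsplit_inexact_convergence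
    {d m : ℕ} (hm : 0 < m)
    (f : Fin m → EuclideanSpace ℝ (Fin d) → ℝ)
    (hdiff : ∀ j, Differentiable ℝ (f j))
    (l L : Fin m → ℝ) (hl : ∀ j, 0 < l j)
    (hstrong : ∀ j x y, f j y ≥ f j x + ⟪gradient (f j) x, y - x⟫ + l j / 2 * ‖y - x‖ ^ 2)
    (hsmooth : ∀ j x y, ‖gradient (f j) x - gradient (f j) y‖ ≤ L j * ‖x - y‖)
    (lstar Lstar : ℝ)
    (hlstar : IsLeast (Set.range l) lstar)
    (hLstar : IsGreatest (Set.range L) Lstar)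
    (kappa : ℝ) (hkappa : kappa = Lstar / lstar)
    (s : ℝ) (hs : s = 1 / Real.sqrt (lstar * Lstar))
    (prox : Fin m → EuclideanSpace ℝ (Fin d) → EuclideanSpace ℝ (Fin d))
    (hprox : ∀ j z u, f j (prox j z) + (2 * s)⁻¹ * ‖z - prox j z‖ ^ 2
        ≤ f j u + (2 * s)⁻¹ * ‖z - u‖ ^ 2)
    (proxU : Fin m → EuclideanSpace ℝ (Fin d) → EuclideanSpace ℝ (Fin d))
    (b : ℝ)
    (hproxU : ∀ j z, ‖proxU j z - prox j z‖ ≤ b)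
    -- FedSplit iterates, indexed from t = 1
    (z : ℕ → PiLp 2 (fun _ : Fin m => EuclideanSpace ℝ (Fin d)))
    (x : ℕ → EuclideanSpace ℝ (Fin d))
    (hinit : ∀ j, z 1 j = x 1)
    (hupdate : ∀ t, 1 ≤ t → ∀ j,
      z (t + 1) j = z t j + (2 : ℝ) • (proxU j ((2 : ℝ) • x t - z t j) - x t))
    (hserver : ∀ t, 1 ≤ t → x (t + 1) = (m : ℝ)⁻¹ • ∑ j, z (t + 1) j)
    -- minimizer of the federated objective
    (xstar : EuclideanSpace ℝ (Fin d))
    (hxstar : IsMinOn (fun y => ∑ j, f j y) Set.univ xstar)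
    -- the unique fixed point of the exact FedSplit iteration
    (zstar : PiLp 2 (fun _ : Fin m => EuclideanSpace ℝ (Fin d)))
    (hzstar : ∀ j, zstar j = zstar j + (2 : ℝ) •
      (prox j ((2 : ℝ) • ((m : ℝ)⁻¹ • ∑ k, zstar k) - zstar j)
        - (m : ℝ)⁻¹ • ∑ k, zstar k)) :
    ∀ t, 1 ≤ t →
      ‖x (t + 1) - xstar‖
        ≤ (1 - 2 / (Real.sqrt kappa + 1)) ^ t * ‖z 1 - zstar‖ / Real.sqrt (m : ℝ)
          + (Real.sqrt kappa + 1) * b := fun t _ =>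
  fedsplit_inexact_convergence_general hdiff hl hstrong hsmooth hlstar hLstar hkappa hs hprox hproxU
    (by simp [hinit, ← Nat.cast_smul_eq_nsmul ℝ, hm.ne']) hupdate hserver hxstar hzstar t
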